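/- Let θ > 0 and let B be a standard Brownian motion. Then e^{-γT}·E[ sup_{s≤T} (θ²s/2 + θB_s) · e^{-θ²T/2 - θB_T} ] → 0 as T → ∞, for any γ > 0. -/

import Mathlib

open MeasureTheory ProbabilityTheory Filter

/-- A minimal axiomatization of a standard Brownian motion on `[0, ∞)`. -/
structure IsStandardBM {Ω : Type*} [MeasurableSpace Ω] (P : Measure Ω)
    (B : ℝ → Ω → ℝ) : Prop where
  meas : ∀ t, Measurable (B t)
  zero : ∀ᵐ ω ∂P, B 0 ω = 0
  gauss_incr : ∀ s t : ℝ, 0 ≤ s → s ≤ t →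
    Measure.map (fun ω => B t ω - B s ω) P = gaussianReal 0 ((t - s).toNNReal)
  indep_incr : ∀ s t u v : ℝ, 0 ≤ s → s ≤ t → t ≤ u → u ≤ v →
    IndepFun (fun ω => B t ω - B s ω) (fun ω => B v ω - B u ω) P
  cont : ∀ᵐ ω ∂P, Continuous fun t => B t ω

lemma chain_dyadic (f : ℝ → ℝ) (h0 : f 0 = 0) (T : ℝ) (a : ℕ → ENNReal)
    (ha : ∀ m k : ℕ, k < 2 ^ m →
      ENNReal.ofReal |f (((k : ℝ) + 1) * (T / 2 ^ m)) - f ((k : ℝ) * (T / 2 ^ m))| ≤ a m) :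
    ∀ n j : ℕ, j ≤ 2 ^ n →
      ENNReal.ofReal |f ((j : ℝ) * (T / 2 ^ n))| ≤ ∑ m ∈ Finset.range (n + 1), a m := by
  intro n
  induction n with
  | zero =>
    intro j hj
    have : j = 0 ∨ j = 1 := by
      simp at hj; omega
    rcases this with rfl | rfl
    · simp [h0]
    · have := ha 0 0 (by simp)
      simpa [h0] using this
  | succ n ih =>
    intro j hj
    have hj' : j ≤ 2 * 2 ^ n := by rw [pow_succ] at hj; omega
    rw [Finset.sum_range_succ]
    have key : ∀ i : ℕ, f (((2 * i : ℕ) : ℝ) * (T / 2 ^ (n + 1))) = f ((i : ℝ) * (T / 2 ^ n)) := by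
      intro i
      congr 1
      push_cast
      rw [pow_succ]
      field_simp
    rcases Nat.even_or_odd' j with ⟨i, rfl | rfl⟩
    · rw [key]
      exact (ih i (by omega)).trans le_self_add
    · have h1 := ih i (by omega)
      have h2 := ha (n + 1) (2 * i) (by rw [pow_succ]; omega)
      rw [← key] at h1
      refine le_trans ?_ (add_le_add h1 h2)
      rw [← ENNReal.ofReal_add (abs_nonneg _) (abs_nonneg _)]
      apply ENNReal.ofReal_le_ofReal
      push_cast
      set x := f ((2 * (i : ℝ) + 1) * (T / 2 ^ (n + 1)))
      set y := f ((2 * (i : ℝ)) * (T / 2 ^ (n + 1)))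
      have := abs_add_le y (x - y)
      simpa using this

lemma chain_bound (f : ℝ → ℝ) (hf : Continuous f) (h0 : f 0 = 0) (T : ℝ) (hT : 0 < T)
    (a : ℕ → ENNReal)
    (ha : ∀ m k : ℕ, k < 2 ^ m →
      ENNReal.ofReal |f (((k : ℝ) + 1) * (T / 2 ^ m)) - f ((k : ℝ) * (T / 2 ^ m))| ≤ a m)
    (s : ℝ) (hs : s ∈ Set.Icc 0 T) : ENNReal.ofReal |f s| ≤ ∑' m, a m := by
  have hx0 : 0 ≤ s / T := div_nonneg hs.1 hT.le
  have hx1 : s / T ≤ 1 := (div_le_one hT).2 hs.2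
  have hlim0 : Tendsto (fun n : ℕ => ((⌊(s / T) * (2 : ℝ) ^ n⌋₊ : ℕ) : ℝ) / (2 : ℝ) ^ n) atTop
      (nhds (s / T)) :=
    (tendsto_nat_floor_mul_div_atTop hx0).comp (tendsto_pow_atTop_atTop_of_one_lt one_lt_two)
  have hlim : Tendsto (fun n : ℕ => ((⌊(s / T) * (2 : ℝ) ^ n⌋₊ : ℕ) : ℝ) * (T / (2 : ℝ) ^ n)) atTop
      (nhds s) := by
    have := hlim0.mul_const T
    rw [div_mul_cancel₀ _ hT.ne'] at this
    refine this.congr fun n => by ring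
  have hlim2 := ENNReal.tendsto_ofReal ((hf.tendsto s).comp hlim).abs
  refine le_of_tendsto' hlim2 fun n => ?_
  refine (chain_dyadic f h0 T a ha n _ ?_).trans (ENNReal.sum_le_tsum _)
  have : (s / T) * (2 : ℝ) ^ n ≤ ((2 ^ n : ℕ) : ℝ) := by
    push_cast
    exact mul_le_of_le_one_left (by positivity) hx1
  exact Nat.floor_le_of_le this

lemma gauss_abs_moment (r : ℝ) (hr : 0 < r) :
    ∃ c : ENNReal, c ≠ ⊤ ∧ ∀ v : ℝ, 0 ≤ v →
      ∫⁻ x, ENNReal.ofReal |x| ^ r ∂(gaussianReal 0 v.toNNReal) =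
        ENNReal.ofReal (v ^ (r / 2)) * c := by
  refine ⟨∫⁻ x, ENNReal.ofReal |x| ^ r ∂(gaussianReal 0 1), ?_, ?_⟩
  · have h := (memLp_id_gaussianReal (μ := 0) (v := 1) r.toNNReal).eLpNorm_lt_top
    have := lintegral_rpow_enorm_lt_top_of_eLpNorm_lt_top (p := (r.toNNReal : ENNReal))
      (by simpa using hr) (by simp) h
    simp only [id, ENNReal.coe_toReal, Real.coe_toNNReal r hr.le] at this
    convert this.ne using 4
    exact (Real.enorm_eq_ofReal_abs _).symm
  · intro v hv
    have h := gaussianReal_map_const_mul (μ := 0) (v := 1) (Real.sqrt v)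
    have hv' : gaussianReal 0 v.toNNReal = (gaussianReal 0 1).map (Real.sqrt v * ·) := by
      rw [h]
      congr 1
      · simp
      · ext
        simp [hv, Real.sq_sqrt]
    rw [hv', lintegral_map (by fun_prop) (by fun_prop), ← lintegral_const_mul _ (by fun_prop)]
    congr 1
    ext x
    rw [abs_mul, ENNReal.ofReal_mul (abs_nonneg _), ENNReal.mul_rpow_of_nonneg _ _ hr.le,
      abs_of_nonneg (Real.sqrt_nonneg v), ENNReal.ofReal_rpow_of_nonneg (Real.sqrt_nonneg v) hr.le]
    congr 2
    rw [Real.sqrt_eq_rpow, ← Real.rpow_mul hv]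
    congr 1; ring

noncomputable def lev {Ω : Type*} (B : ℝ → Ω → ℝ) (r T : ℝ) (m : ℕ) (ω : Ω) : ENNReal :=
  (∑ k ∈ Finset.range (2 ^ m), ENNReal.ofReal
    |B (((k : ℝ) + 1) * (T / 2 ^ m)) ω - B ((k : ℝ) * (T / 2 ^ m)) ω| ^ r) ^ (1 / r)

lemma lev_bound {Ω : Type*} (B : ℝ → Ω → ℝ) (r T : ℝ) (hr : 0 < r) (m : ℕ) (ω : Ω) (k : ℕ)
    (hk : k < 2 ^ m) :
    ENNReal.ofReal |B (((k : ℝ) + 1) * (T / 2 ^ m)) ω - B ((k : ℝ) * (T / 2 ^ m)) ω|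
      ≤ lev B r T m ω := by
  unfold lev
  rw [one_div, ENNReal.le_rpow_inv_iff hr]
  exact Finset.single_le_sum (f := fun k : ℕ => ENNReal.ofReal
    |B (((k : ℝ) + 1) * (T / 2 ^ m)) ω - B ((k : ℝ) * (T / 2 ^ m)) ω| ^ r)
    (fun _ _ => zero_le) (Finset.mem_range.2 hk)

section
variable {Ω : Type*} [MeasurableSpace Ω] {P : Measure Ω} {B : ℝ → Ω → ℝ}

lemma lev_meas (hB : IsStandardBM P B) (r T : ℝ) (m : ℕ) : Measurable (lev B r T m) := by
  unfold lev
  have := hB.meas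
  refine Measurable.pow_const (Finset.measurable_sum _ fun k _ => ?_) _
  refine Measurable.pow_const (Measurable.ennreal_ofReal ?_) _
  exact ((this _).sub (this _)).abs

lemma scale_id (r T : ℝ) (hr : 0 < r) (hT : 0 < T) (m : ℕ) :
    ((2 : ℝ) ^ m * (T / 2 ^ m) ^ (r / 2)) ^ (1 / r)
      = Real.sqrt T * ((2 : ℝ) ^ (1 / r - 1 / 2)) ^ m := by
  have h2 : (0 : ℝ) < 2 ^ m := by positivity
  rw [Real.mul_rpow h2.le (by positivity), ← Real.rpow_mul (by positivity),
    Real.div_rpow hT.le h2.le, Real.sqrt_eq_rpow]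
  have e : r / 2 * (1 / r) = 1 / 2 := by field_simp
  rw [e, ← Real.rpow_natCast, ← Real.rpow_mul (by norm_num), ← Real.rpow_mul (by norm_num),
    ← Real.rpow_natCast, ← Real.rpow_mul (by norm_num), sub_mul, Real.rpow_sub (by norm_num)]
  rw [mul_comm (m : ℝ), mul_comm (m : ℝ)]
  ring

lemma lev_moment (hB : IsStandardBM P B) (r : ℝ) (hr : 0 < r) :
    ∃ c : ENNReal, c ≠ ⊤ ∧ ∀ T : ℝ, 0 < T → ∀ m : ℕ,
      (∫⁻ ω, lev B r T m ω ^ r ∂P) ^ (1 / r) =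
        ENNReal.ofReal (Real.sqrt T) * ENNReal.ofReal ((2 : ℝ) ^ (1 / r - 1 / 2)) ^ m * c := by
  obtain ⟨c, hc, h⟩ := gauss_abs_moment r hr
  refine ⟨c ^ (1 / r), ENNReal.rpow_ne_top_of_nonneg (by positivity) hc, fun T hT m => ?_⟩
  have hm : ∀ k : ℕ, Measurable fun ω => B (((k : ℝ) + 1) * (T / 2 ^ m)) ω -
      B ((k : ℝ) * (T / 2 ^ m)) ω := fun k => (hB.meas _).sub (hB.meas _)
  have h1 : ∫⁻ ω, lev B r T m ω ^ r ∂P =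
      ENNReal.ofReal ((2 : ℝ) ^ m * (T / 2 ^ m) ^ (r / 2)) * c := by
    unfold lev
    simp_rw [← ENNReal.rpow_mul, one_div_mul_cancel hr.ne', ENNReal.rpow_one]
    rw [lintegral_finsetSum _ (fun k _ => ((hm k).abs.ennreal_ofReal.pow_const _))]
    have : ∀ k ∈ Finset.range (2 ^ m), ∫⁻ ω, ENNReal.ofReal
        |B (((k : ℝ) + 1) * (T / 2 ^ m)) ω - B ((k : ℝ) * (T / 2 ^ m)) ω| ^ r ∂P =
        ENNReal.ofReal ((T / 2 ^ m) ^ (r / 2)) * c := by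
      intro k _
      rw [← h _ (by positivity)]
      have hg := hB.gauss_incr ((k : ℝ) * (T / 2 ^ m)) (((k : ℝ) + 1) * (T / 2 ^ m))
        (by positivity) (by gcongr; linarith)
      have e : ((k : ℝ) + 1) * (T / 2 ^ m) - (k : ℝ) * (T / 2 ^ m) = T / 2 ^ m := by ring
      rw [e] at hg
      rw [← hg, lintegral_map (by fun_prop) (hm k)]
    rw [Finset.sum_congr rfl this, Finset.sum_const, Finset.card_range, nsmul_eq_mul,
      ENNReal.ofReal_mul (by positivity), mul_assoc]
    congr 1
    rw [ENNReal.ofReal_pow (by norm_num)]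
    simp
  rw [h1, ENNReal.mul_rpow_of_nonneg _ _ (by positivity),
    ENNReal.ofReal_rpow_of_nonneg (by positivity) (by positivity), scale_id r T hr hT,
    ENNReal.ofReal_mul (by positivity), ENNReal.ofReal_pow (by positivity)]

lemma W_moment (hB : IsStandardBM P B) (θ q T : ℝ) (hT : 0 < T) (hq : 0 < q) :
    (∫⁻ ω, ENNReal.ofReal (Real.exp (-θ ^ 2 * T / 2 - θ * B T ω)) ^ q ∂P) ^ (1 / q) =
      ENNReal.ofReal (Real.exp ((q - 1) * (θ ^ 2 * T / 2))) := by
  have hg := hB.gauss_incr 0 T le_rfl hT.le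
  have hg' : Measure.map (B T) P = gaussianReal 0 T.toNNReal := by
    rw [sub_zero] at hg
    rw [← hg]
    refine Measure.map_congr ?_
    filter_upwards [hB.zero] with ω h
    simp [h]
  have e : ∀ ω, ENNReal.ofReal (Real.exp (-θ ^ 2 * T / 2 - θ * B T ω)) ^ q =
      ENNReal.ofReal (Real.exp (-q * θ ^ 2 * T / 2)) *
        ENNReal.ofReal (Real.exp ((-q * θ) * B T ω)) := by
    intro ω
    rw [ENNReal.ofReal_rpow_of_pos (Real.exp_pos _), ← Real.exp_mul,
      ← ENNReal.ofReal_mul (Real.exp_pos _).le, ← Real.exp_add]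
    congr 2; ring
  have hm := hB.meas T
  simp_rw [e]
  rw [lintegral_const_mul _ (by fun_prop)]
  have h2 : ∫⁻ ω, ENNReal.ofReal (Real.exp ((-q * θ) * B T ω)) ∂P =
      ENNReal.ofReal (Real.exp (T * (-q * θ) ^ 2 / 2)) := by
    rw [← lintegral_map (f := fun x => ENNReal.ofReal (Real.exp ((-q * θ) * x)))
      (by fun_prop) hm, hg', ← ofReal_integral_eq_lintegral_ofReal
        (integrable_exp_mul_gaussianReal _) (ae_of_all _ fun _ => (Real.exp_pos _).le)]
    congr 1
    have := mgf_gaussianReal (p := gaussianReal 0 T.toNNReal) (X := id) (μ := 0)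
      (v := T.toNNReal) (by simp) (-q * θ)
    simpa [mgf, hT.le] using this
  rw [h2, ← ENNReal.ofReal_mul (Real.exp_pos _).le, ← Real.exp_add,
    ENNReal.ofReal_rpow_of_pos (Real.exp_pos _), ← Real.exp_mul]
  congr 2
  field_simp
  ring

lemma main_bound (hB : IsStandardBM P B) (θ r q : ℝ) (hrq : r.HolderConjugate q) (hr : 2 < r) :
    ∃ K : ENNReal, K ≠ ⊤ ∧ ∀ T : ℝ, 0 < T →
      ∫⁻ ω, (∑' m, lev B r T m ω) *
        ENNReal.ofReal (Real.exp (-θ ^ 2 * T / 2 - θ * B T ω)) ∂P ≤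
      ENNReal.ofReal (Real.sqrt T) * K *
        ENNReal.ofReal (Real.exp ((q - 1) * (θ ^ 2 * T / 2))) := by
  obtain ⟨c, hc, h⟩ := lev_moment hB r (by linarith)
  refine ⟨(1 - ENNReal.ofReal ((2 : ℝ) ^ (1 / r - 1 / 2)))⁻¹ * c, ?_, fun T hT => ?_⟩
  · refine ENNReal.mul_ne_top ?_ hc
    rw [ENNReal.inv_ne_top]
    refine (tsub_pos_of_lt ?_).ne'
    rw [ENNReal.ofReal_lt_one]
    refine Real.rpow_lt_one_of_one_lt_of_neg one_lt_two ?_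
    rw [sub_neg]
    exact one_div_lt_one_div_of_lt two_pos hr
  · have hm := hB.meas T
    have hmW : Measurable fun ω => ENNReal.ofReal (Real.exp (-θ ^ 2 * T / 2 - θ * B T ω)) := by
      fun_prop
    simp_rw [← ENNReal.tsum_mul_right]
    rw [lintegral_tsum (by exact fun m => ((lev_meas hB r T m).mul hmW).aemeasurable)]
    have hstep : ∀ m, ∫⁻ ω, lev B r T m ω *
        ENNReal.ofReal (Real.exp (-θ ^ 2 * T / 2 - θ * B T ω)) ∂P ≤
        ENNReal.ofReal (Real.sqrt T) * ENNReal.ofReal ((2 : ℝ) ^ (1 / r - 1 / 2)) ^ m * c *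
        ENNReal.ofReal (Real.exp ((q - 1) * (θ ^ 2 * T / 2))) := by
      intro m
      have := ENNReal.lintegral_mul_le_Lp_mul_Lq P hrq (lev_meas hB r T m).aemeasurable
        hmW.aemeasurable
      rw [h T hT m, W_moment hB θ q T hT hrq.right_pos] at this
      exact this
    refine (ENNReal.tsum_le_tsum hstep).trans_eq ?_
    rw [ENNReal.tsum_mul_right, ENNReal.tsum_mul_right, ENNReal.tsum_mul_left,
      ENNReal.tsum_geometric]
    ring

lemma sup_bound (hB : IsStandardBM P B) (θ r T : ℝ) (hθ : 0 < θ) (hr : 0 < r) (hT : 0 < T) :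
    ∀ᵐ ω ∂P, ENNReal.ofReal |sSup ((fun s => θ ^ 2 * s / 2 + θ * B s ω) '' Set.Icc 0 T)| ≤
      ENNReal.ofReal (θ ^ 2 * T / 2) + ENNReal.ofReal θ * ∑' m, lev B r T m ω := by
  filter_upwards [hB.zero, hB.cont] with ω h0 hc
  have key : ∀ s ∈ Set.Icc 0 T, ENNReal.ofReal |θ ^ 2 * s / 2 + θ * B s ω| ≤
      ENNReal.ofReal (θ ^ 2 * T / 2) + ENNReal.ofReal θ * ∑' m, lev B r T m ω := by
    intro s hs
    have h1 := chain_bound (fun t => B t ω) hc h0 T hT (fun m => lev B r T m ω)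
      (fun m k hk => lev_bound B r T hr m ω k hk) s hs
    calc ENNReal.ofReal |θ ^ 2 * s / 2 + θ * B s ω|
        ≤ ENNReal.ofReal (θ ^ 2 * T / 2 + θ * |B s ω|) := by
          apply ENNReal.ofReal_le_ofReal
          refine (abs_add_le _ _).trans (add_le_add ?_ ?_)
          · rw [abs_of_nonneg (by have := hs.1; positivity)]
            have := hs.2
            gcongr
          · rw [abs_mul, abs_of_pos hθ]
      _ ≤ _ := by
          rw [ENNReal.ofReal_add (by positivity) (by positivity), ENNReal.ofReal_mul hθ.le]
          gcongr
  have hcont : ContinuousOn (fun s => θ ^ 2 * s / 2 + θ * B s ω) (Set.Icc 0 T) := by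
    have : Continuous fun s => θ ^ 2 * s / 2 + θ * B s ω :=
      Continuous.add (by fun_prop) (hc.const_mul θ)
    exact this.continuousOn
  obtain ⟨s, hs, he, -⟩ := isCompact_Icc.exists_sSup_image_eq_and_ge
    (Set.nonempty_Icc.2 hT.le) hcont
  rw [he]
  exact key s hs

end

theorem stmt_17 {Ω : Type*} [MeasurableSpace Ω] (P : Measure Ω) [IsProbabilityMeasure P]
    (B : ℝ → Ω → ℝ) (hB : IsStandardBM P B)
    (θ γ : ℝ) (hθ : 0 < θ) (hγ : 0 < γ) :
    Tendsto (fun T => Real.exp (-γ * T) *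
        ∫ ω, (sSup ((fun s => θ ^ 2 * s / 2 + θ * B s ω) '' Set.Icc 0 T)) *
          Real.exp (-θ ^ 2 * T / 2 - θ * B T ω) ∂P)
      atTop (nhds 0) := by
  obtain ⟨δ, hδ0, hδ1, hδ2⟩ : ∃ δ : ℝ, 0 < δ ∧ δ ≤ 1 / 2 ∧ δ * θ ^ 2 ≤ γ := by
    refine ⟨min (1 / 2) (γ / θ ^ 2), by positivity, min_le_left _ _, ?_⟩
    rw [← le_div_iff₀ (by positivity)]
    exact min_le_right _ _
  have hr : 2 < 1 + 1 / δ := by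
    have : 2 ≤ 1 / δ := by rw [le_div_iff₀ hδ0]; linarith
    linarith
  have hrq : (1 + 1 / δ).HolderConjugate (1 + δ) := by
    refine ⟨?_, by positivity, by positivity⟩
    field_simp
    ring
  obtain ⟨K, hK, hmain⟩ := main_bound hB θ (1 + 1 / δ) (1 + δ) hrq hr
  have hbound : ∀ T : ℝ, 0 < T →
      ‖∫ ω, (sSup ((fun s => θ ^ 2 * s / 2 + θ * B s ω) '' Set.Icc 0 T)) *
          Real.exp (-θ ^ 2 * T / 2 - θ * B T ω) ∂P‖ ≤
        θ ^ 2 * T / 2 + θ * (Real.sqrt T * K.toReal * Real.exp (δ * (θ ^ 2 * T / 2))) := by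
    intro T hT
    have hm := hB.meas T
    have hmW : Measurable fun ω => ENNReal.ofReal (Real.exp (-θ ^ 2 * T / 2 - θ * B T ω)) := by
      fun_prop
    have hW := W_moment hB θ 1 T hT one_pos
    simp only [ENNReal.rpow_one, div_one, sub_self, zero_mul, Real.exp_zero,
      ENNReal.ofReal_one] at hW
    have h2 := hmain T hT
    rw [add_sub_cancel_left] at h2
    refine (norm_integral_le_lintegral_norm _).trans ?_
    refine ENNReal.toReal_le_of_le_ofReal (by positivity) ?_
    calc _ ≤ ∫⁻ ω, (ENNReal.ofReal (θ ^ 2 * T / 2) *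
            ENNReal.ofReal (Real.exp (-θ ^ 2 * T / 2 - θ * B T ω)) +
            ENNReal.ofReal θ * ((∑' m, lev B (1 + 1 / δ) T m ω) *
            ENNReal.ofReal (Real.exp (-θ ^ 2 * T / 2 - θ * B T ω)))) ∂P := by
          refine lintegral_mono_ae ?_
          filter_upwards [sup_bound hB θ (1 + 1 / δ) T hθ (by positivity) hT] with ω hω
          rw [norm_mul, ENNReal.ofReal_mul (norm_nonneg _), Real.norm_eq_abs,
            Real.norm_of_nonneg (Real.exp_pos _).le, ← mul_assoc, ← add_mul]
          gcongr
      _ ≤ ENNReal.ofReal (θ ^ 2 * T / 2) + ENNReal.ofReal θ * (ENNReal.ofReal (Real.sqrt T) * K *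
            ENNReal.ofReal (Real.exp (δ * (θ ^ 2 * T / 2)))) := by
          rw [lintegral_add_left (hmW.const_mul _), lintegral_const_mul _ hmW, hW, mul_one,
            lintegral_const_mul' _ _ ENNReal.ofReal_ne_top]
          gcongr
      _ = _ := by
          rw [ENNReal.ofReal_add (by positivity) (by positivity), ENNReal.ofReal_mul hθ.le,
            ENNReal.ofReal_mul (by positivity), ENNReal.ofReal_mul (by positivity),
            ENNReal.ofReal_toReal hK]
  have hlim : Tendsto (fun T : ℝ => (θ ^ 2 / 2 + θ * K.toReal) *
      ((1 + T) * Real.exp (-(γ / 2) * T))) atTop (nhds 0) := by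
    have h1 := Real.tendsto_pow_mul_exp_neg_atTop_nhds_zero 1
    have h0 := Real.tendsto_pow_mul_exp_neg_atTop_nhds_zero 0
    have hs : Tendsto (fun T : ℝ => (γ / 2) * T) atTop atTop :=
      tendsto_id.const_mul_atTop (by positivity)
    have h3 := ((h0.comp hs).add ((h1.comp hs).const_mul (2 / γ))).const_mul
      (θ ^ 2 / 2 + θ * K.toReal)
    simp only [mul_zero, add_zero] at h3
    refine h3.congr fun T => ?_
    simp only [Function.comp, pow_zero, pow_one, neg_mul]
    field_simp
  refine squeeze_zero_norm' ?_ hlim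
  filter_upwards [eventually_gt_atTop (0 : ℝ)] with T hT
  rw [norm_mul, Real.norm_of_nonneg (Real.exp_pos _).le]
  have hsq : Real.sqrt T ≤ 1 + T := by
    rw [Real.sqrt_le_left (by positivity)]; nlinarith
  have hexp : Real.exp (δ * (θ ^ 2 * T / 2)) ≤ Real.exp (γ / 2 * T) := by
    apply Real.exp_le_exp.2
    nlinarith
  have hexp1 : 1 ≤ Real.exp (γ / 2 * T) := Real.one_le_exp (by positivity)
  calc _ ≤ Real.exp (-γ * T) * (θ ^ 2 * T / 2 +
        θ * (Real.sqrt T * K.toReal * Real.exp (δ * (θ ^ 2 * T / 2)))) := by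
        gcongr; exact hbound T hT
    _ ≤ Real.exp (-γ * T) * (θ ^ 2 * (1 + T) / 2 * Real.exp (γ / 2 * T) +
        θ * ((1 + T) * K.toReal * Real.exp (γ / 2 * T))) := by
        gcongr
        calc θ ^ 2 * T / 2 ≤ θ ^ 2 * (1 + T) / 2 * 1 := by
              rw [mul_one]; gcongr; linarith
          _ ≤ _ := by gcongr
    _ = _ := by
        have : Real.exp (-(γ / 2) * T) = Real.exp (-γ * T) * Real.exp (γ / 2 * T) := by
          rw [← Real.exp_add]; congr 1; ring
        rw [this]; ring
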